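/- arXiv:2507.20946 — 2 statements merged into one kernel-verified Lean document; each statement's English description precedes it below -/
import Mathlib

section
/- Let ξ = e^{2πi/3} and A = diag(ξ, ξ², 1) ∈ GL₃(ℂ). The centralizer in PGL₃(ℂ) of [A] is the union of: the images of invertible diagonal matrices, the images of invertible matrices supported on positions (1,2),(2,3),(3,1), and the images of invertible matrices supported on positions (1,3),(2,1),(3,2). The component group of this centralizer (quotient by the identity component, which is the image of the diagonal matrices) is cyclic of order 3. -/
open Matrix

/-!
If `[X]` commutes with `[A]` in a quotient `H ⧸ Z(H)`, then the commutator `⁅X, A⁆` is central and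
depends only on `[X]`; sending `[X]` to it is a homomorphism on the centralizer of `[A]`, whose
kernel is the image of the centralizer of `A`. In `PGL`, with `A` a multiple of the diagonal matrix
of an injective character `χ` of a finite group `G`, comparing entries of `X * A = c • (A * X)`
shows that `c` runs over the values of `χ`, and that `c = χ k` exactly when `X` is supported on the
positions `(i, i + k)`. The kernel is thus the image of the diagonal matrices: it is closed,
connected and of finite index, hence it is the identity component, and the component group is the
range of `χ`.
-/

section CentralCommutator

open scoped commutatorElement
open Subgroup

variable {H : Type*} [Group H]

theorem mk_mem_centralizer_mk_iff {a x : H} :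
    (x : H ⧸ center H) ∈ centralizer {(a : H ⧸ center H)} ↔ ⁅x, a⁆ ∈ center H := by
  rw [mem_centralizer_singleton_iff, ← commutatorElement_eq_one_iff_mul_comm,
    ← QuotientGroup.eq_one_iff, ← QuotientGroup.mk'_apply, ← QuotientGroup.mk'_apply,
    ← map_commutatorElement, QuotientGroup.mk'_apply]

theorem commutatorElement_mul_left_of_mem_center {z : H} (hz : z ∈ center H) (x a : H) :
    ⁅x * z, a⁆ = ⁅x, a⁆ := by
  rw [commutatorElement_mul_left_eq_conj_mul,
    commutatorElement_eq_one_iff_mul_comm.2 (mem_center_iff.1 hz a).symm, mul_one, mul_inv_cancel,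
    one_mul]

/-- The map `[x] ↦ ⁅x, a⁆` on the quotient of a group by its center. -/
def commutatorModCenter (a : H) : H ⧸ center H → H :=
  Quotient.lift (⁅·, a⁆) fun x y hxy ↦ by
    have h := commutatorElement_mul_left_of_mem_center (QuotientGroup.leftRel_apply.1 hxy) x a
    rwa [mul_inv_cancel_left, eq_comm] at h

/-- The homomorphism `[x] ↦ ⁅x, a⁆` on the centralizer of `[a]` in the quotient of a group by its
center. Its values are central, which is what makes it multiplicative. -/
def centralCommutator (a : H) : centralizer {(a : H ⧸ center H)} →* H where
  toFun x := commutatorModCenter a x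
  map_one' := commutatorElement_one_left (g := a)
  map_mul' := by
    rintro ⟨x, hx⟩ ⟨y, hy⟩
    obtain ⟨x, rfl⟩ := QuotientGroup.mk_surjective x
    obtain ⟨y, rfl⟩ := QuotientGroup.mk_surjective y
    change ⁅x * y, a⁆ = ⁅x, a⁆ * ⁅y, a⁆
    rw [commutatorElement_mul_left_eq_conj_mul,
      mem_center_iff.1 (mk_mem_centralizer_mk_iff.1 hy) x, mul_inv_cancel_right,
      mem_center_iff.1 (mk_mem_centralizer_mk_iff.1 hy)]

theorem mem_range_centralCommutator {a z : H} :
    z ∈ (centralCommutator a).range ↔ z ∈ center H ∧ ∃ x : H, ⁅x, a⁆ = z := by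
  constructor
  · rintro ⟨⟨x, hx⟩, rfl⟩
    obtain ⟨x, rfl⟩ := QuotientGroup.mk_surjective x
    exact ⟨mk_mem_centralizer_mk_iff.1 hx, x, rfl⟩
  · rintro ⟨hz, x, rfl⟩
    exact ⟨⟨x, mk_mem_centralizer_mk_iff.2 hz⟩, rfl⟩

theorem image_val_ker_centralCommutator (a : H) :
    Subtype.val '' ((centralCommutator a).ker : Set (centralizer {(a : H ⧸ center H)})) =
      QuotientGroup.mk '' (centralizer {a} : Set H) := by
  have mem_centralizer_iff (x : H) : x ∈ centralizer {a} ↔ ⁅x, a⁆ = 1 := by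
    rw [mem_centralizer_singleton_iff, commutatorElement_eq_one_iff_mul_comm, eq_comm]
  ext x
  constructor
  · rintro ⟨⟨x, hx⟩, hxa, rfl⟩
    obtain ⟨x, rfl⟩ := QuotientGroup.mk_surjective x
    exact ⟨x, (mem_centralizer_iff x).2 hxa, rfl⟩
  · rintro ⟨x, hx, rfl⟩
    have hxa := (mem_centralizer_iff x).1 hx
    exact ⟨⟨x, mk_mem_centralizer_mk_iff.2 (hxa ▸ one_mem _)⟩, hxa, rfl⟩

end CentralCommutator

section IdentityComponent

open Subgroup

variable {H : Type*} [Group H] [TopologicalSpace H] [IsTopologicalGroup H]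

theorem mem_connectedComponent_iff_inv_mul_mem {x y : H} :
    y ∈ connectedComponent x ↔ x⁻¹ * y ∈ connectedComponentOfOne H := by
  have mapsTo (g z : H) : Set.MapsTo (g * ·) (connectedComponent z) (connectedComponent (g * z)) :=
    (continuous_const_mul g).mapsTo_connectedComponent z
  constructor
  · intro hy
    have h := mapsTo x⁻¹ x hy
    rwa [inv_mul_cancel] at h
  · intro hy
    have h : x * (x⁻¹ * y) ∈ connectedComponent (x * 1) := mapsTo x 1 hy
    rwa [mul_one, mul_inv_cancel_left] at h

instance normal_connectedComponentOfOne : (connectedComponentOfOne H).Normal where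
  conj_mem n hn g := by
    have h := (IsTopologicalGroup.continuous_conj g).mapsTo_connectedComponent 1 hn
    rwa [mul_one, mul_inv_cancel] at h

variable (H) in
/-- The components of a topological group are the cosets of its identity component. -/
def connectedComponentsEquivQuotient :
    ConnectedComponents H ≃ H ⧸ connectedComponentOfOne H :=
  Quotient.congrRight fun x y ↦ by
    rw [QuotientGroup.leftRel_apply, ← mem_connectedComponent_iff_inv_mul_mem]
    exact eq_comm.trans connectedComponent_eq_iff_mem

theorem connectedComponentOfOne_eq_of_isClosed_of_isPreconnected {N : Subgroup H} [N.FiniteIndex]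
    (closed : IsClosed (N : Set H)) (preconnected : IsPreconnected (N : Set H)) :
    connectedComponentOfOne H = N := by
  have clopen : IsClopen (N : Set H) := ⟨closed, N.isOpen_of_isClosed_of_finiteIndex closed⟩
  exact le_antisymm (clopen.connectedComponent_subset N.one_mem)
    (preconnected.subset_connectedComponent N.one_mem)

theorem continuous_centralCommutator (a : H) : Continuous (centralCommutator a) := by
  have continuous_commutator : Continuous fun x : H ↦ x * a * x⁻¹ * a⁻¹ := by fun_prop
  exact (continuous_commutator.quotient_lift _).comp continuous_subtype_val

theorem connectedComponentOfOne_centralizer_mk [T1Space H] (a : H)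
    [Finite (centralCommutator a).range] (h : IsPreconnected (centralizer {a} : Set H)) :
    connectedComponentOfOne (centralizer {(a : H ⧸ center H)}) = (centralCommutator a).ker := by
  apply connectedComponentOfOne_eq_of_isClosed_of_isPreconnected
  · exact isClosed_singleton.preimage (continuous_centralCommutator a)
  · rw [← Topology.IsInducing.subtypeVal.isPreconnected_image, image_val_ker_centralCommutator]
    exact h.image _ QuotientGroup.continuous_mk.continuousOn

end IdentityComponent

section DiagonalMatrices

variable {n R : Type*} [Fintype n] [DecidableEq n] [CommRing R]

theorem setOf_isDiag_eq_range :
    {X : GL n R | X.val.IsDiag} = Set.range (Units.map (diagonalRingHom n R : (n → R) →* _)) := by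
  ext X
  constructor
  · intro hX
    have isUnit_diag : IsUnit X.val.diag := by
      rw [← isUnit_diagonal, IsDiag.diagonal_diag hX]
      exact X.isUnit
    exact ⟨isUnit_diag.unit, Units.ext (IsDiag.diagonal_diag hX)⟩
  · rintro ⟨u, rfl⟩
    exact isDiag_diagonal u.val

theorem isPreconnected_setOf_isDiag [TopologicalSpace R] [PreconnectedSpace Rˣ] :
    IsPreconnected {X : GL n R | X.val.IsDiag} := by
  have : PreconnectedSpace (n → R)ˣ :=
    ContinuousMulEquiv.piUnits.symm.surjective.denseRange.preconnectedSpace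
      ContinuousMulEquiv.piUnits.symm.continuous
  rw [setOf_isDiag_eq_range]
  exact isPreconnected_range (continuous_id.matrix_diagonal.units_map _)

end DiagonalMatrices

section ShiftedDiagonal

open scoped commutatorElement
open Subgroup

variable {G R : Type*} [AddGroup G] [Fintype G] [DecidableEq G] [CommRing R]

variable (R) in
/-- The invertible matrices, with rows and columns indexed by a finite group, that are supported on
the positions `(i, i + k)`. -/
def shiftedDiagonal (k : G) : Set (GL G R) :=
  {X | ∀ i j, j ≠ i + k → X.val i j = 0}

theorem shiftedDiagonal_zero : shiftedDiagonal R (0 : G) = {X | X.val.IsDiag} := by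
  simp only [shiftedDiagonal, add_zero, IsDiag, Pairwise, ne_comm]

theorem shiftedDiagonal_nonempty (k : G) : (shiftedDiagonal R k).Nonempty := by
  refine ⟨permMatrixHom.toHomUnits (Equiv.addRight k)⁻¹, fun i j hij ↦ ?_⟩
  simp [permMatrixHom, PEquiv.toMatrix, hij.symm]

/-- The scalar matrices with entries in the range of the character `χ`, as a homomorphism. -/
def scalarCharacter (χ : AddChar G R) : Multiplicative G →* GL G R :=
  (GeneralLinearGroup.scalar G).comp χ.toMonoidHom.toHomUnits

theorem scalar_eq_scalarCharacter_iff {χ : AddChar G R} {c : Rˣ} {k : G} :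
    GeneralLinearGroup.scalar G c = scalarCharacter χ (.ofAdd k) ↔ (c : R) = χ k := by
  simp [scalarCharacter, Units.ext_iff]

theorem scalarCharacter_injective {χ : AddChar G R} (hχ : Function.Injective χ) :
    Function.Injective (scalarCharacter χ) := fun _ _ h ↦
  hχ (scalar_eq_scalarCharacter_iff.1 h)

theorem commutatorElement_eq_scalar_iff_of_diagonal {n : Type*} [Fintype n] [DecidableEq n]
    [IsDomain R] {A X : GL n R} {d : n → R} (hA : A.val = diagonal d) {c : Rˣ} :
    ⁅X, A⁆ = GeneralLinearGroup.scalar n c ↔ ∀ i j, X.val i j ≠ 0 → d j = c * d i := by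
  rw [commutatorElement_def, mul_inv_eq_iff_eq_mul, mul_inv_eq_iff_eq_mul, mul_assoc, Units.ext_iff]
  simp only [Units.val_mul, hA, GeneralLinearGroup.coe_scalar, ← Matrix.ext_iff, scalar_apply,
    mul_diagonal, diagonal_mul, ← mul_assoc, diagonal_mul_diagonal]
  refine forall₂_congr fun i j ↦ ?_
  rw [mul_comm, mul_eq_mul_right_iff, or_iff_not_imp_right]

theorem mem_center_iff_exists_eq_scalar {n : Type*} [Fintype n] [DecidableEq n] {X : GL n R} :
    X ∈ center (GL n R) ↔ ∃ c, X = GeneralLinearGroup.scalar n c := by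
  simp only [GeneralLinearGroup.center_eq_range_scalar, MonoidHom.mem_range, eq_comm]

variable [IsDomain R] {χ : AddChar G R} {a : R} {A X : GL G R}

theorem commutatorElement_eq_scalar_iff_of_addChar (hA : A.val = diagonal (a • ⇑χ)) {c : Rˣ} :
    ⁅X, A⁆ = GeneralLinearGroup.scalar G c ↔ ∀ i j, X.val i j ≠ 0 → χ (-i + j) = c := by
  have smul_ne_zero (i : G) : a * χ i ≠ 0 :=
    (Pi.isUnit_iff.1 (isUnit_diagonal.1 (hA ▸ A.isUnit)) i).ne_zero
  have smul_eq (i j : G) : a * χ j = χ (-i + j) * (a * χ i) := by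
    rw [mul_left_comm, mul_comm (χ _), ← χ.map_add_eq_mul, add_neg_cancel_left]
  refine (commutatorElement_eq_scalar_iff_of_diagonal hA).trans
    (forall₂_congr fun i j ↦ imp_congr_right fun _ ↦ ?_)
  rw [Pi.smul_apply, Pi.smul_apply, smul_eq_mul, smul_eq_mul, smul_eq i j,
    mul_left_inj' (smul_ne_zero i)]

theorem commutatorElement_eq_scalarCharacter_iff (hA : A.val = diagonal (a • ⇑χ))
    (hχ : Function.Injective χ) {k : G} :
    ⁅X, A⁆ = scalarCharacter χ (.ofAdd k) ↔ X ∈ shiftedDiagonal R k := by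
  refine (commutatorElement_eq_scalar_iff_of_addChar hA).trans
    (forall₂_congr fun i j ↦ not_imp_comm.trans ?_)
  exact imp_congr_left (not_congr (hχ.eq_iff.trans neg_add_eq_iff_eq_add))

theorem commutatorElement_mem_center_iff (hA : A.val = diagonal (a • ⇑χ))
    (hχ : Function.Injective χ) :
    ⁅X, A⁆ ∈ center (GL G R) ↔ ∃ k, X ∈ shiftedDiagonal R k := by
  simp only [← commutatorElement_eq_scalarCharacter_iff hA hχ, mem_center_iff_exists_eq_scalar]
  constructor
  · rintro ⟨c, hc⟩
    obtain ⟨j, hj⟩ : ∃ j, X.val 0 j ≠ 0 := by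
      by_contra! row_eq_zero
      exact X.det_ne_zero (det_eq_zero_of_row_eq_zero 0 row_eq_zero)
    have c_eq := (commutatorElement_eq_scalar_iff_of_addChar hA).1 hc 0 j hj
    exact ⟨-0 + j, hc.trans (scalar_eq_scalarCharacter_iff.2 c_eq.symm)⟩
  · rintro ⟨k, hk⟩
    exact ⟨_, hk⟩

theorem range_centralCommutator_eq_range_scalarCharacter (hA : A.val = diagonal (a • ⇑χ))
    (hχ : Function.Injective χ) :
    (centralCommutator A).range = (scalarCharacter χ).range := by
  ext Z
  rw [mem_range_centralCommutator]
  constructor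
  · rintro ⟨central, X, rfl⟩
    obtain ⟨k, hk⟩ := (commutatorElement_mem_center_iff hA hχ).1 central
    exact ⟨.ofAdd k, ((commutatorElement_eq_scalarCharacter_iff hA hχ).2 hk).symm⟩
  · rintro ⟨k, rfl⟩
    obtain ⟨X, hX⟩ := shiftedDiagonal_nonempty (R := R) k.toAdd
    have commutator_eq := (commutatorElement_eq_scalarCharacter_iff hA hχ).2 hX
    exact ⟨commutator_eq ▸ (commutatorElement_mem_center_iff hA hχ).2 ⟨_, hX⟩, X, commutator_eq⟩

theorem centralizer_singleton_eq_setOf_isDiag (hA : A.val = diagonal (a • ⇑χ))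
    (hχ : Function.Injective χ) :
    (centralizer {A} : Set (GL G R)) = {X | X.val.IsDiag} := by
  ext X
  rw [SetLike.mem_coe, mem_centralizer_singleton_iff, ← shiftedDiagonal_zero,
    ← commutatorElement_eq_scalarCharacter_iff hA hχ, ofAdd_zero, map_one,
    commutatorElement_eq_one_iff_mul_comm, eq_comm]

theorem centralizer_mk_eq_iUnion (hA : A.val = diagonal (a • ⇑χ)) (hχ : Function.Injective χ) :
    (centralizer {(A : GL G R ⧸ center (GL G R))} : Set (GL G R ⧸ center (GL G R))) =
      ⋃ k, QuotientGroup.mk '' shiftedDiagonal R k := by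
  rw [← Set.image_iUnion]
  ext x
  constructor
  · intro hx
    obtain ⟨X, rfl⟩ := QuotientGroup.mk_surjective x
    obtain ⟨k, hk⟩ := (commutatorElement_mem_center_iff hA hχ).1 (mk_mem_centralizer_mk_iff.1 hx)
    exact ⟨X, Set.mem_iUnion.2 ⟨k, hk⟩, rfl⟩
  · rintro ⟨X, hX, rfl⟩
    exact mk_mem_centralizer_mk_iff.2 <|
      (commutatorElement_mem_center_iff hA hχ).2 (Set.mem_iUnion.1 hX)

end ShiftedDiagonal

theorem exists_injective_addChar_fin {n : ℕ} [NeZero n] {M : Type*} [CommMonoid M] {ζ : M}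
    (hζ : IsPrimitiveRoot ζ n) :
    ∃ χ : AddChar (Fin n) M, Function.Injective χ ∧ ∀ k, χ k = ζ ^ k.val := by
  let χ : AddChar (Fin n) M :=
    { toFun k := ζ ^ k.val
      map_zero_eq_one' := by rw [Fin.val_zero, pow_zero]
      map_add_eq_mul' k l := by
        rw [Fin.val_add, ← pow_eq_pow_mod _ hζ.pow_eq_one, pow_add] }
  exact ⟨χ, fun k l h ↦ Fin.ext (hζ.pow_inj k.isLt l.isLt h), fun _ ↦ rfl⟩

theorem exists_injective_addChar_vec_eq_smul {R : Type*} [CommSemiring R] {ξ : R}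
    (hξ : IsPrimitiveRoot ξ 3) :
    ∃ χ : AddChar (Fin 3) R, Function.Injective χ ∧ ![ξ, ξ ^ 2, 1] = ξ • ⇑χ := by
  obtain ⟨χ, hχ, χ_apply⟩ := exists_injective_addChar_fin hξ
  refine ⟨χ, hχ, funext fun i ↦ ?_⟩
  rw [Pi.smul_apply, χ_apply, smul_eq_mul, ← pow_succ']
  fin_cases i <;> simp [hξ.pow_eq_one]

theorem iUnion_image_shiftedDiagonal_fin_three {R α : Type*} [CommRing R]
    (f : GL (Fin 3) R → α) :
    ⋃ k : Fin 3, f '' shiftedDiagonal R k =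
      f '' {X | ∀ i j, i ≠ j → X.val i j = 0} ∪
      f '' {X | ∀ i j, ¬ ((i, j) ∈ ({(0, 1), (1, 2), (2, 0)} : Set (Fin 3 × Fin 3))) →
        X.val i j = 0} ∪
      f '' {X | ∀ i j, ¬ ((i, j) ∈ ({(0, 2), (1, 0), (2, 1)} : Set (Fin 3 × Fin 3))) →
        X.val i j = 0} := by
  have zero : shiftedDiagonal R (0 : Fin 3) = {X | ∀ i j, i ≠ j → X.val i j = 0} :=
    shiftedDiagonal_zero
  have one : shiftedDiagonal R (1 : Fin 3) = {X | ∀ i j, ¬ ((i, j) ∈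
      ({(0, 1), (1, 2), (2, 0)} : Set (Fin 3 × Fin 3))) → X.val i j = 0} := by
    ext X
    simp [shiftedDiagonal, Fin.forall_fin_succ]
  have two : shiftedDiagonal R (2 : Fin 3) = {X | ∀ i j, ¬ ((i, j) ∈
      ({(0, 2), (1, 0), (2, 1)} : Set (Fin 3 × Fin 3))) → X.val i j = 0} := by
    ext X
    simp [shiftedDiagonal, Fin.forall_fin_succ]
  rw [← zero, ← one, ← two]
  ext x
  simp only [Set.mem_iUnion, Set.mem_union, Fin.exists_fin_succ, Fin.exists_fin_zero, or_false]
  exact or_assoc.symm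

open Subgroup in
theorem stmt6_general {G R : Type*} [AddGroup G] [Fintype G] [DecidableEq G] [CommRing R]
    [IsDomain R] [TopologicalSpace R] [IsTopologicalSemiring R] [T2Space R] [PreconnectedSpace Rˣ]
    (χ : AddChar G R) (hχ : Function.Injective χ) (a : R) (A : GL G R)
    (hA : A.val = diagonal (a • ⇑χ)) :
    (centralizer {(A : GL G R ⧸ center (GL G R))} : Set (GL G R ⧸ center (GL G R))) =
        ⋃ k, QuotientGroup.mk '' shiftedDiagonal R k ∧
      Subtype.val '' (connectedComponent 1 : Set (centralizer {(A : GL G R ⧸ center (GL G R))})) =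
        QuotientGroup.mk '' {X : GL G R | X.val.IsDiag} ∧
      Nonempty (centralizer {(A : GL G R ⧸ center (GL G R))} ⧸
        connectedComponentOfOne (centralizer {(A : GL G R ⧸ center (GL G R))}) ≃*
          Multiplicative G) := by
  have range_eq := range_centralCommutator_eq_range_scalarCharacter hA hχ
  have centralizer_eq := centralizer_singleton_eq_setOf_isDiag hA hχ
  have : Finite (centralCommutator A).range := range_eq ▸
    Finite.of_surjective _ (scalarCharacter χ).rangeRestrict_surjective
  have component_eq_ker := connectedComponentOfOne_centralizer_mk A
    (centralizer_eq ▸ isPreconnected_setOf_isDiag)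
  refine ⟨centralizer_mk_eq_iUnion hA hχ, ?_, ⟨?_⟩⟩
  · rw [← centralizer_eq, ← image_val_ker_centralCommutator, ← component_eq_ker]
    rfl
  · exact (QuotientGroup.quotientMulEquivOfEq component_eq_ker).trans <|
      (QuotientGroup.quotientKerEquivRange _).trans <| (MulEquiv.subgroupCongr range_eq).trans
        (MonoidHom.ofInjective (scalarCharacter_injective hχ)).symm

/-- With `ξ = e^{2πi/3}` and `A = diag(ξ, ξ², 1)`, the centralizer of `[A]`
in `PGL₃(ℂ)` is the union of the images of the invertible diagonal matrices, of the
invertible matrices supported on positions `(1,2),(2,3),(3,1)`, and of the invertible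
matrices supported on positions `(1,3),(2,1),(3,2)`; its component group is cyclic of
order `3`. -/
theorem stmt6 (ξ : ℂ) (hξ : ξ = Complex.exp (2 * Real.pi * Complex.I / 3))
    (A : GL (Fin 3) ℂ)
    (hA : (A : Matrix (Fin 3) (Fin 3) ℂ) = Matrix.diagonal ![ξ, ξ ^ 2, 1]) :
    (Subgroup.centralizer {QuotientGroup.mk' (Subgroup.center (GL (Fin 3) ℂ)) A} :
        Set ((GL (Fin 3) ℂ) ⧸ Subgroup.center (GL (Fin 3) ℂ))) =
      (QuotientGroup.mk' (Subgroup.center (GL (Fin 3) ℂ))) ''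
        {X : GL (Fin 3) ℂ | ∀ i j, i ≠ j → (X : Matrix (Fin 3) (Fin 3) ℂ) i j = 0} ∪
      (QuotientGroup.mk' (Subgroup.center (GL (Fin 3) ℂ))) ''
        {X : GL (Fin 3) ℂ | ∀ i j, ¬ ((i, j) ∈ ({(0, 1), (1, 2), (2, 0)} :
            Set (Fin 3 × Fin 3))) → (X : Matrix (Fin 3) (Fin 3) ℂ) i j = 0} ∪
      (QuotientGroup.mk' (Subgroup.center (GL (Fin 3) ℂ))) ''
        {X : GL (Fin 3) ℂ | ∀ i j, ¬ ((i, j) ∈ ({(0, 2), (1, 0), (2, 1)} :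
            Set (Fin 3 × Fin 3))) → (X : Matrix (Fin 3) (Fin 3) ℂ) i j = 0} ∧
    Nonempty (ConnectedComponents
      (Subgroup.centralizer {QuotientGroup.mk' (Subgroup.center (GL (Fin 3) ℂ)) A} :
        Subgroup ((GL (Fin 3) ℂ) ⧸ Subgroup.center (GL (Fin 3) ℂ))) ≃ ZMod 3) := by
  have primitive : IsPrimitiveRoot ξ 3 := hξ ▸ mod_cast Complex.isPrimitiveRoot_exp 3 three_ne_zero
  obtain ⟨χ, hχ, vec_eq⟩ := exists_injective_addChar_vec_eq_smul primitive
  obtain ⟨centralizer_eq, -, ⟨componentGroupEquiv⟩⟩ :=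
    stmt6_general χ hχ ξ A (hA.trans (congrArg diagonal vec_eq))
  have componentsEquiv := (connectedComponentsEquivQuotient _).trans componentGroupEquiv.toEquiv
  exact ⟨centralizer_eq.trans (iUnion_image_shiftedDiagonal_fin_three _), ⟨componentsEquiv⟩⟩
end

section
/- Fix a ∈ ℂˣ, a primitive cube root of unity ξ, and c ∈ ℂˣ. There is no X ∈ GL₃(ℂ) satisfying X·A = ξ·A·X where A = [[0,1,0],[a,0,0],[0,0,c]]. -/
open Matrix

section Trace

variable {n R : Type*} [Fintype n] [DecidableEq n] [CommSemiring R]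

theorem trace_eq_of_semiconjBy {X A B : Matrix n n R} (hX : IsUnit X) (h : SemiconjBy X A B) :
    trace A = trace B := by
  obtain ⟨u, rfl⟩ := hX
  calc
    trace A = trace (u.val * A * u⁻¹.val) := (trace_units_conj u A).symm
    _ = trace B := by rw [h.eq, Units.mul_inv_cancel_right]

theorem trace_eq_zero_of_mul_eq_smul_mul [IsCancelMulZero R] {X A : Matrix n n R} {ξ : R}
    (hξ : ξ ≠ 1) (hX : IsUnit X) (h : X * A = ξ • (A * X)) : trace A = 0 := by
  have hconj : SemiconjBy X A (ξ • A) := h.trans (smul_mul_assoc ξ A X).symm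
  have htrace : ξ * trace A = trace A :=
    calc
      ξ * trace A = trace (ξ • A) := (trace_smul ξ A).symm
      _ = trace A := (trace_eq_of_semiconjBy hX hconj).symm
  exact (mul_left_eq_self₀.mp htrace).resolve_left hξ

end Trace

theorem stmt11_general {R : Type*} [CommRing R] [NoZeroDivisors R] (a c : R) (hc : c ≠ 0)
    (ξ : R) (hξ : ξ ≠ 1) :
    ¬ ∃ X : Matrix (Fin 3) (Fin 3) R, IsUnit X.det ∧
      X * !![0, 1, 0; a, 0, 0; 0, 0, c] = ξ • (!![0, 1, 0; a, 0, 0; 0, 0, c] * X) := by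
  rintro ⟨X, hX, h⟩
  have htrace : trace !![0, 1, 0; a, 0, 0; 0, 0, c] = 0 :=
    trace_eq_zero_of_mul_eq_smul_mul hξ ((isUnit_iff_isUnit_det X).mpr hX) h
  exact hc (by simpa [trace_fin_three] using htrace)

/-- For `a, c ∈ ℂˣ` and a primitive cube root of unity `ξ`, no invertible
`X` satisfies `X·A = ξ·A·X` where `A = [[0,1,0],[a,0,0],[0,0,c]]`. -/
theorem stmt11 (a c : ℂ) (ha : a ≠ 0) (hc : c ≠ 0)
    (ξ : ℂ) (hξ : ξ ^ 3 = 1) (hξ1 : ξ ≠ 1) :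
    ¬ ∃ X : Matrix (Fin 3) (Fin 3) ℂ, IsUnit X.det ∧
      X * !![0, 1, 0; a, 0, 0; 0, 0, c] = ξ • (!![0, 1, 0; a, 0, 0; 0, 0, c] * X) :=
  stmt11_general a c hc ξ hξ1
end
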